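/- Let G be the CPDAG of the Markov equivalence class of a DAG, and let X and Y be distinct nodes that are not adjacent in G. Then X is a definite non-ancestor of Y in G if and only if X and Y are d-separated by Pa_G(X) in every DAG of the Markov equivalence class represented by G. -/

import Mathlib

/-- A directed acyclic graph on node set `V`: a directed edge relation with no
directed cycles (no edge `a → b` together with a directed path from `b` back to `a`). -/
structure Dag (V : Type*) where
  edge : V → V → Prop
  acyclic : ∀ a b : V, edge a b → ¬ Relation.ReflTransGen edge b a

variable {V : Type*}

namespace Dag

/-- `a` is an ancestor of `b` (equivalently, `b` is a descendant of `a`):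
there is a directed path from `a` to `b`; every node is its own ancestor. -/
def Anc (D : Dag V) (a b : V) : Prop := Relation.ReflTransGen D.edge a b

/-- `a` and `b` are adjacent (joined by an edge in either direction). -/
def Adj (D : Dag V) (a b : V) : Prop := D.edge a b ∨ D.edge b a

/-- The parents of `x` in the DAG `D`. -/
def Pa (D : Dag V) (x : V) : Set V := {a | D.edge a x}

/-- The Markov blanket of `x`: parents, children, and parents of children of `x`
(excluding `x` itself). -/
def MB (D : Dag V) (x : V) : Set V :=
  {v | v ≠ x ∧ (D.edge v x ∨ D.edge x v ∨ ∃ c : V, D.edge x c ∧ D.edge v c)}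

end Dag

/-- A path between `x` and `y` with respect to an adjacency relation `A`:
a sequence of distinct nodes, starting at `x` and ending at `y`, in which
consecutive nodes are adjacent. `n` is the number of edges of the path. -/
structure GPath (A : V → V → Prop) (x y : V) where
  n : ℕ
  f : Fin (n + 1) → V
  inj : Function.Injective f
  first : f ⟨0, by omega⟩ = x
  last : f ⟨n, by omega⟩ = y
  adj : ∀ i : Fin n, A (f i.castSucc) (f i.succ)

namespace GPath

/-- The non-endpoint node at position `i` of the path `p` is a collider with respect
to the directed edge relation `E`: both incident edges of the path point into it. -/
def ColliderAt {A : V → V → Prop} {x y : V} (p : GPath A x y)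
    (E : V → V → Prop) (i : ℕ) : Prop :=
  ∃ (_ : 0 < i) (_ : i < p.n),
    E (p.f ⟨i - 1, by omega⟩) (p.f ⟨i, by omega⟩) ∧
    E (p.f ⟨i + 1, by omega⟩) (p.f ⟨i, by omega⟩)

/-- The path `p` is blocked by the node set `S` in the DAG `D`: it contains a
non-collider that lies in `S`, or a collider such that neither the collider nor any
of its descendants lies in `S`. -/
def Blocked {A : V → V → Prop} {x y : V} (p : GPath A x y)
    (D : Dag V) (S : Set V) : Prop :=
  ∃ (i : ℕ) (_ : 0 < i) (_ : i < p.n),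
    (¬ p.ColliderAt D.edge i ∧ p.f ⟨i, by omega⟩ ∈ S) ∨
    (p.ColliderAt D.edge i ∧ ∀ d : V, D.Anc (p.f ⟨i, by omega⟩) d → d ∉ S)

end GPath

namespace Dag

/-- `x` and `y` are d-separated by `S` in the DAG `D`: every path between `x` and `y`
is blocked by `S`. -/
def dSep (D : Dag V) (x y : V) (S : Set V) : Prop :=
  ∀ p : GPath D.Adj x y, p.Blocked D S

/-- Two DAGs on the same node set are Markov equivalent if they have exactly the same
d-separation relations. -/
def MEquiv (D D' : Dag V) : Prop :=
  ∀ (x y : V) (S : Set V), D.dSep x y S ↔ D'.dSep x y S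

/-- The edge between `a` and `b` is directed `a → b` in the CPDAG of the Markov
equivalence class of `D`: the edge `a → b` holds in every DAG Markov equivalent to `D`. -/
def CpDir (D : Dag V) (a b : V) : Prop :=
  ∀ D' : Dag V, D.MEquiv D' → D'.edge a b

/-- The edge between `a` and `b` is undirected (`a − b`) in the CPDAG: `a` and `b` are
adjacent (the CPDAG has the same adjacencies as the DAGs of the MEC) but the edge is not
directed either way in the CPDAG. -/
def CpUndir (D : Dag V) (a b : V) : Prop :=
  D.Adj a b ∧ ¬ D.CpDir a b ∧ ¬ D.CpDir b a

/-- `Pa_G(a)`: the nodes with a directed edge into `a` in the CPDAG. -/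
def CpPa (D : Dag V) (a : V) : Set V := {p | D.CpDir p a}

/-- `Ch_G(a)`: the nodes `b` with the edge directed `a → b` in the CPDAG. -/
def CpCh (D : Dag V) (a : V) : Set V := {c | D.CpDir a c}

/-- `Sib_G(a)`: the nodes joined to `a` by an undirected edge in the CPDAG. -/
def CpSib (D : Dag V) (a : V) : Set V := {s | D.CpUndir a s}

end Dag

namespace GPath

/-- `p` is a possibly directed path in the CPDAG: no edge on it is directed
backwards (as `V_i ← V_{i+1}`) in the CPDAG. -/
def CpPossiblyDirected {D : Dag V} {x y : V} (p : GPath D.Adj x y) : Prop :=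
  ∀ i : Fin p.n, ¬ D.CpDir (p.f i.succ) (p.f i.castSucc)

/-- `p` is a (fully) directed path in the CPDAG: every edge on it is directed
forwards in the CPDAG. -/
def CpDirected {D : Dag V} {x y : V} (p : GPath D.Adj x y) : Prop :=
  ∀ i : Fin p.n, D.CpDir (p.f i.castSucc) (p.f i.succ)

/-- `p` is a directed path from `x` to `y` in the DAG `D` itself. -/
def DirectedIn {D : Dag V} {x y : V} (p : GPath D.Adj x y) : Prop :=
  ∀ i : Fin p.n, D.edge (p.f i.castSucc) (p.f i.succ)

/-- `p` is unshielded: for every three consecutive nodes on it, the first and the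
third are non-adjacent. -/
def Unshielded {D : Dag V} {x y : V} (p : GPath D.Adj x y) : Prop :=
  ∀ (i : ℕ) (_ : i + 2 ≤ p.n), ¬ D.Adj (p.f ⟨i, by omega⟩) (p.f ⟨i + 2, by omega⟩)

end GPath

namespace Dag

/-- `x` is a possible ancestor of `y` in the CPDAG: there is a possibly directed path
from `x` to `y`. -/
def PossAn (D : Dag V) (x y : V) : Prop :=
  ∃ p : GPath D.Adj x y, p.CpPossiblyDirected

/-- `x` is an explicit ancestor of `y` in the CPDAG: there is a fully directed path
from `x` to `y` in the CPDAG. -/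
def ExplAn (D : Dag V) (x y : V) : Prop :=
  ∃ p : GPath D.Adj x y, p.CpDirected

/-- The CPDAG is amenable relative to `(x, y)`: every possibly directed path from
`x` to `y` starts with a directed edge out of `x`. -/
def Amenable (D : Dag V) (x y : V) : Prop :=
  ∀ p : GPath D.Adj x y, p.CpPossiblyDirected →
    ∀ _ : 0 < p.n, D.CpDir (p.f ⟨0, by omega⟩) (p.f ⟨1, by omega⟩)

/-- `S` is a valid adjustment set for `(x, y)` in the DAG `D`:
(i) no element of `S` is a descendant of any node `w ≠ x` lying on a directed path
from `x` to `y`, and (ii) every path between `x` and `y` that is not a directed path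
from `x` to `y` is blocked by `S`. -/
def ValidAdjustment (D : Dag V) (x y : V) (S : Set V) : Prop :=
  (∀ s ∈ S, ∀ w : V, w ≠ x → D.Anc x w → D.Anc w y → ¬ D.Anc w s) ∧
  (∀ p : GPath D.Adj x y, ¬ p.DirectedIn → p.Blocked D S)

/-- `Cn_D(x, y)`: the nodes `w ≠ x` lying on some directed path from `x` to `y` in `D`. -/
def Cn (D : Dag V) (x y : V) : Set V := {w | w ≠ x ∧ D.Anc x w ∧ D.Anc w y}

end Dag

/-!
By Lauritzen's criterion, d-separation is separation in the moral graph of the ancestral closure.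
Reversing a covered edge does not affect it, so two DAGs with the same adjacencies and v-structures
are Markov equivalent, since one is turned into the other by reversing covered edges (Chickering).

Closing the v-structures under Meek's rules leaves an undirected part in which the DAG has no
v-structure, and a Meek edge `a → b` followed by an undirected edge `b – c` gives a Meek edge
`a → c`. Hence the undirected part can be reoriented, again without v-structures, to have its only
source in the component of `X` at `X`. In the resulting member of the class the parents of `X` are
`Pa_G(X)` and the descendants of `X` are its possible descendants in `G`. There the local Markov
property separates `X` from its non-descendants, while a directed path out of `X` avoids the parents
of `X` and so stays open.
-/

open Relation

theorem reflTransGen_or_single {r : V → V → Prop} {a b u v : V}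
    (h : ReflTransGen (fun p q => r p q ∨ p = b ∧ q = a) u v) :
    ReflTransGen r u v ∨ ReflTransGen r u b ∧ ReflTransGen r a v := by
  induction h with
  | refl => exact Or.inl .refl
  | tail _ e ih =>
    rcases e with e | ⟨rfl, rfl⟩
    · exact ih.imp (·.tail e) fun h => ⟨h.1, h.2.tail e⟩
    · exact Or.inr ⟨ih.elim id And.left, .refl⟩

theorem reflTransGen_absorb {r s : V → V → Prop} (habs : ∀ a b c, r a b → s b c → r a c)
    {a b c : V} (hab : r a b) (hbc : ReflTransGen s b c) : r a c := by
  induction hbc with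
  | refl => exact hab
  | tail _ e ih => exact habs _ _ _ ih e

theorem reflTransGen_or_of_absorb {r s : V → V → Prop} (habs : ∀ a b c, r a b → s b c → r a c)
    {u v : V} (h : ReflTransGen (fun a b => r a b ∨ s a b) u v) :
    ∃ w, ReflTransGen s u w ∧ ReflTransGen r w v := by
  induction h with
  | refl => exact ⟨u, .refl, .refl⟩
  | tail _ e ih =>
    obtain ⟨w, huw, hwb⟩ := ih
    rcases e with e | e
    · exact ⟨w, huw, hwb.tail e⟩
    · rcases hwb.cases_tail with rfl | ⟨p, hwp, hp⟩
      · exact ⟨_, huw.tail e, .refl⟩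
      · exact ⟨w, huw, hwp.tail (habs _ _ _ hp e)⟩

namespace Dag

section Basic

variable {D : Dag V} {a b c : V}

theorem Anc.refl (D : Dag V) (a : V) : D.Anc a a := ReflTransGen.refl

theorem Anc.trans (hab : D.Anc a b) (hbc : D.Anc b c) : D.Anc a c := ReflTransGen.trans hab hbc

theorem anc_of_edge (h : D.edge a b) : D.Anc a b := ReflTransGen.single h

theorem ne_of_edge (h : D.edge a b) : a ≠ b := by
  rintro rfl
  exact D.acyclic _ _ h (Anc.refl D _)

theorem not_edge_symm (h : D.edge a b) : ¬ D.edge b a :=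
  fun h' => D.acyclic _ _ h (anc_of_edge h')

theorem Anc.antisymm (hab : D.Anc a b) (hba : D.Anc b a) : a = b := by
  rcases hab.cases_head with h | ⟨c, e, hcb⟩
  · exact h
  · exact absurd (hcb.trans hba) (D.acyclic _ _ e)

theorem Adj.symm (h : D.Adj a b) : D.Adj b a := Or.symm h

theorem Adj.ne (h : D.Adj a b) : a ≠ b := h.elim ne_of_edge fun e => (ne_of_edge e).symm

theorem Adj.edge_of_anc (h : D.Adj a b) (hab : D.Anc a b) : D.edge a b :=
  h.resolve_right fun e => D.acyclic _ _ e hab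

theorem edge_of_edge_of_edge (hac : D.edge a c) (hcb : D.edge c b) (hadj : D.Adj a b) :
    D.edge a b :=
  hadj.edge_of_anc ((anc_of_edge hac).trans (anc_of_edge hcb))

theorem ext_of_adj_of_edge_imp {D E : Dag V} (hadj : ∀ a b, D.Adj a b ↔ E.Adj a b)
    (hedge : ∀ a b, D.edge a b → E.edge a b) : D = E := by
  have h : D.edge = E.edge := by
    funext a b
    refine propext ⟨hedge a b, fun e => ?_⟩
    exact ((hadj a b).2 (Or.inl e)).resolve_right fun e' => not_edge_symm e (hedge _ _ e')
  cases D; cases E; congr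

/-- The ancestral closure of a node set: all ancestors of its elements. -/
def ancestors (D : Dag V) (S : Set V) : Set V := {v | ∃ d ∈ S, D.Anc v d}

variable {S : Set V}

theorem mem_ancestors_of_mem (h : a ∈ S) : a ∈ D.ancestors S := ⟨a, h, Anc.refl D a⟩

theorem mem_ancestors_of_anc (hab : D.Anc a b) (hb : b ∈ D.ancestors S) : a ∈ D.ancestors S :=
  let ⟨d, hd, hbd⟩ := hb
  ⟨d, hd, hab.trans hbd⟩

theorem mem_ancestors_of_edge (hab : D.edge a b) (hb : b ∈ D.ancestors S) : a ∈ D.ancestors S :=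
  mem_ancestors_of_anc (anc_of_edge hab) hb

theorem ancestors_mono {T : Set V} (h : S ⊆ T) : D.ancestors S ⊆ D.ancestors T :=
  fun _ ⟨d, hd, had⟩ => ⟨d, h hd, had⟩

end Basic

section Height

/-- The number of ancestors of a node. When this is finite it increases strictly along edges. -/
noncomputable def height (D : Dag V) (a : V) : ℕ := {u | D.Anc u a}.ncard

variable [Finite V] {D : Dag V} {a b : V}

theorem height_pos (D : Dag V) (a : V) : 0 < D.height a :=
  (Set.ncard_pos (Set.toFinite _)).2 ⟨a, Anc.refl D a⟩

theorem height_lt_of_edge (e : D.edge a b) : D.height a < D.height b := by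
  refine Set.ncard_lt_ncard ⟨fun u hu => Anc.trans hu (anc_of_edge e), fun h => ?_⟩
    (Set.toFinite _)
  exact D.acyclic _ _ e (h (Anc.refl D b))

theorem height_le_of_anc (h : D.Anc a b) : D.height a ≤ D.height b := by
  induction h with
  | refl => exact le_rfl
  | tail _ e ih => exact ih.trans (height_lt_of_edge e).le

end Height

section ActiveWalk

/-- Consecutive nodes `a, b, c` of a walk do not block it: the middle node lies in
`D.ancestors S` if it is a collider, and outside `T` if it is not. The collider set `S` and the
non-collider set `T` are kept apart because on a path from `x` to `y` it makes no difference whether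
interior nodes avoid `S` or `S \ {x, y}`, and the second set also suits walks that revisit `x` or
`y`. -/
def OpenTriple (D : Dag V) (S T : Set V) (a b c : V) : Prop :=
  (D.edge a b ∧ D.edge c b → b ∈ D.ancestors S) ∧ (¬ (D.edge a b ∧ D.edge c b) → b ∉ T)

/-- `f 0, …, f n` is an active walk: consecutive nodes are adjacent and all triples of
consecutive nodes are open. The values of `f` beyond `n` are irrelevant. -/
structure IsActiveWalk (D : Dag V) (S T : Set V) (n : ℕ) (f : ℕ → V) : Prop where
  adj : ∀ i < n, D.Adj (f i) (f (i + 1))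
  openTriple : ∀ i, i + 2 ≤ n → D.OpenTriple S T (f i) (f (i + 1)) (f (i + 2))

variable {D : Dag V} {S T : Set V} {a b c x y v w z : V} {n : ℕ} {f : ℕ → V}

theorem openTriple_of_edge_left (h : D.edge b a) (hb : b ∉ T) : D.OpenTriple S T a b c :=
  ⟨fun hc => absurd hc.1 (not_edge_symm h), fun _ => hb⟩

theorem openTriple_of_edge_right (h : D.edge b c) (hb : b ∉ T) : D.OpenTriple S T a b c :=
  ⟨fun hc => absurd hc.2 (not_edge_symm h), fun _ => hb⟩

theorem openTriple_of_collider (hab : D.edge a b) (hcb : D.edge c b) (hb : b ∈ D.ancestors S) :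
    D.OpenTriple S T a b c :=
  ⟨fun _ => hb, fun h => absurd ⟨hab, hcb⟩ h⟩

theorem OpenTriple.notMem_of_edge_left (h : D.OpenTriple S T a b c) (e : D.edge b a) : b ∉ T :=
  h.2 fun hc => not_edge_symm e hc.1

theorem OpenTriple.notMem_of_edge_right (h : D.OpenTriple S T a b c) (e : D.edge b c) : b ∉ T :=
  h.2 fun hc => not_edge_symm e hc.2

namespace IsActiveWalk

theorem restrict (h : D.IsActiveWalk S T n f) {m : ℕ} (hm : m ≤ n) : D.IsActiveWalk S T m f :=
  ⟨fun i hi => h.adj i (by omega), fun i hi => h.openTriple i (by omega)⟩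

theorem snoc (h : D.IsActiveWalk S T n f) (hadj : D.Adj (f n) w)
    (hopen : ∀ k, n = k + 1 → D.OpenTriple S T (f k) (f n) w) :
    D.IsActiveWalk S T (n + 1) (Function.update f (n + 1) w) := by
  have hf : ∀ i ≤ n, Function.update f (n + 1) w i = f i := fun i hi =>
    Function.update_of_ne (by omega) _ _
  have hw : Function.update f (n + 1) w (n + 1) = w := Function.update_self _ _ _
  refine ⟨fun i hi => ?_, fun i hi => ?_⟩
  · rcases Nat.lt_succ_iff_lt_or_eq.1 hi with hin | rfl
    · rw [hf i hin.le, hf (i + 1) hin]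
      exact h.adj i hin
    · rwa [hf i le_rfl, hw]
  · rcases Nat.lt_succ_iff_lt_or_eq.1 hi with hin | rfl
    · rw [hf i (by omega), hf (i + 1) (by omega), hf (i + 2) hin]
      exact h.openTriple i hin
    · rw [hf i (by omega), hf (i + 1) le_rfl, hw]
      exact hopen i rfl

/-- Follow the walk forwards until it ends or an edge points back, at an open collider. -/
theorem mem_ancestors_or_anc_last (h : D.IsActiveWalk S T n f) {i : ℕ} (hi : i < n)
    (e : D.edge (f i) (f (i + 1))) :
    f (i + 1) ∈ D.ancestors S ∨ D.Anc (f (i + 1)) (f n) := by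
  obtain ⟨k, rfl⟩ := Nat.exists_eq_add_of_lt hi
  induction k generalizing i with
  | zero => exact Or.inr (Anc.refl D _)
  | succ k ih =>
    rcases h.adj (i + 1) (by omega) with e' | e'
    · have hn : i + (k + 1) + 1 = i + 1 + k + 1 := by omega
      rw [hn] at h ⊢
      exact (ih e' h (by omega)).imp (mem_ancestors_of_edge e') (anc_of_edge e').trans
    · exact Or.inl ((h.openTriple i (by omega)).1 ⟨e, e'⟩)

theorem mem_ancestors_or_anc_first (h : D.IsActiveWalk S T n f) {i : ℕ} (hi : i < n)
    (e : D.edge (f (i + 1)) (f i)) : f i ∈ D.ancestors S ∨ D.Anc (f i) (f 0) := by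
  induction i with
  | zero => exact Or.inr (Anc.refl D _)
  | succ i ih =>
    rcases h.adj i (by omega) with e' | e'
    · exact Or.inl ((h.openTriple i (by omega)).1 ⟨e', e⟩)
    · exact (ih (by omega) e').imp (mem_ancestors_of_edge e') (anc_of_edge e').trans

theorem mem_ancestors (h : D.IsActiveWalk S T n f) {i : ℕ} (hi : i ≤ n) :
    f i ∈ D.ancestors (insert (f 0) (insert (f n) S)) := by
  have hS : D.ancestors S ⊆ D.ancestors (insert (f 0) (insert (f n) S)) :=
    ancestors_mono fun _ hd => Or.inr (Or.inr hd)
  rcases i with _ | i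
  · exact mem_ancestors_of_mem (Or.inl rfl)
  rcases h.adj i hi with e | e
  · exact (h.mem_ancestors_or_anc_last hi e).elim (fun hm => hS hm)
      fun ha => ⟨f n, Or.inr (Or.inl rfl), ha⟩
  · refine mem_ancestors_of_edge e ?_
    exact (h.mem_ancestors_or_anc_first hi e).elim (fun hm => hS hm)
      fun ha => ⟨f 0, Or.inl rfl, ha⟩

end IsActiveWalk

/-- There is an active walk from `x` with last edge `v – w` which is a path up to `v`. -/
def ReachesAlong (D : Dag V) (S T : Set V) (x v w : V) : Prop :=
  ∃ n f, D.IsActiveWalk S T (n + 1) f ∧ Set.InjOn f (Set.Iic n) ∧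
    f 0 = x ∧ f n = v ∧ f (n + 1) = w

/-- There is an active path from `x` to `y`. -/
def HasActivePath (D : Dag V) (S T : Set V) (x y : V) : Prop :=
  ∃ n f, D.IsActiveWalk S T n f ∧ Set.InjOn f (Set.Iic n) ∧ f 0 = x ∧ f n = y

theorem injOn_Iic_succ_or_exists_eq (hf : Set.InjOn f (Set.Iic n)) :
    Set.InjOn f (Set.Iic (n + 1)) ∨ ∃ k ≤ n, f k = f (n + 1) := by
  by_cases h : ∃ k ≤ n, f k = f (n + 1)
  · exact Or.inr h
  · left
    have hIic : Set.Iic (n + 1) = insert (n + 1) (Set.Iic n) := (Order.Iic_succ n)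
    rw [hIic, Set.injOn_insert (by simp)]
    exact ⟨hf, fun ⟨k, hk, hkn⟩ => h ⟨k, hk, hkn⟩⟩

theorem ReachesAlong.hasActivePath (h : D.ReachesAlong S T x v w) : D.HasActivePath S T x w := by
  obtain ⟨n, f, hf, hinj, hx, -, hw⟩ := h
  rcases injOn_Iic_succ_or_exists_eq hinj with hinj' | ⟨k, hk, hkw⟩
  · exact ⟨n + 1, f, hf, hinj', hx, hw⟩
  · exact ⟨k, f, hf.restrict (by omega), hinj.mono (Set.Iic_subset_Iic.2 hk), hx, hkw.trans hw⟩

theorem IsActiveWalk.reachesAlong (h : D.IsActiveWalk S T n f) (hinj : Set.InjOn f (Set.Iic n))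
    (hadj : D.Adj (f n) w) (hopen : ∀ k, n = k + 1 → D.OpenTriple S T (f k) (f n) w) :
    D.ReachesAlong S T (f 0) (f n) w := by
  have hf : ∀ i ≤ n, Function.update f (n + 1) w i = f i := fun i hi =>
    Function.update_of_ne (by omega) _ _
  exact ⟨n, _, h.snoc hadj hopen, hinj.congr fun i hi => (hf i hi).symm, hf 0 (by omega),
    hf n le_rfl, Function.update_self _ _ _⟩

theorem reachesAlong_self (h : D.Adj x w) : D.ReachesAlong S T x x w :=
  IsActiveWalk.reachesAlong (n := 0) (f := fun _ => x)
    ⟨fun _ hi => absurd hi (by omega), fun _ hi => absurd hi (by omega)⟩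
    (fun i hi j hj _ => (Nat.le_zero.1 hi).trans (Nat.le_zero.1 hj).symm) h
    fun _ hk => absurd hk (by omega)

/-- Cutting the loop between two visits `f (k + 1)` and `f (n + 1)` of a node keeps it open: were
it a closed collider, the loop would be a directed cycle. -/
theorem IsActiveWalk.openTriple_of_loop (h : D.IsActiveWalk S T (n + 1) f) {k : ℕ} (hk : k + 1 ≤ n)
    (hloop : f (k + 1) = f (n + 1)) (hadj : D.Adj (f (n + 1)) z)
    (hopen : D.OpenTriple S T (f n) (f (n + 1)) z) :
    D.OpenTriple S T (f k) (f (n + 1)) z := by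
  have hleft : D.OpenTriple S T (f k) (f (n + 1)) (f (k + 2)) :=
    hloop ▸ h.openTriple k (by omega)
  refine ⟨fun ⟨hin, _⟩ => ?_, fun hnc => ?_⟩
  · rcases h.adj (k + 1) (by omega) with e | e
    · rcases h.mem_ancestors_or_anc_last (by omega) e with hm | ha
      · exact hloop ▸ mem_ancestors_of_edge e hm
      · exact absurd (hloop ▸ ha) (D.acyclic _ _ e)
    · exact hleft.1 ⟨hin, hloop ▸ e⟩
  · rcases hadj with e | e
    · exact hopen.notMem_of_edge_right e
    · refine hleft.notMem_of_edge_left ?_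
      exact hloop ▸ (h.adj k (by omega)).resolve_left fun e' => hnc ⟨hloop ▸ e', e⟩

theorem ReachesAlong.step (h : D.ReachesAlong S T x v w) (hadj : D.Adj w z)
    (hopen : D.OpenTriple S T v w z) : D.ReachesAlong S T x w z := by
  obtain ⟨n, f, hf, hinj, rfl, rfl, rfl⟩ := h
  rcases injOn_Iic_succ_or_exists_eq hinj with hinj' | ⟨k, hk, hloop⟩
  · refine hf.reachesAlong hinj' hadj fun k hk => ?_
    obtain rfl : n = k := by omega
    exact hopen
  · have := (hf.restrict (m := k) (by omega)).reachesAlong (w := z)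
      (hinj.mono (Set.Iic_subset_Iic.2 hk)) (hloop ▸ hadj) ?_
    · rwa [hloop] at this
    · rintro j rfl
      rw [hloop]
      exact hf.openTriple_of_loop hk hloop hadj hopen

theorem hasActivePath_of_not_dSep (h : ¬ D.dSep x y S) : D.HasActivePath S (S \ {x, y}) x y := by
  rw [dSep, not_forall] at h
  obtain ⟨p, hp⟩ := h
  obtain ⟨f, hf⟩ : ∃ f : ℕ → V, ∀ i (hi : i ≤ p.n), p.f ⟨i, by omega⟩ = f i :=
    ⟨fun i => if hi : i ≤ p.n then p.f ⟨i, by omega⟩ else x, fun i hi => by simp [hi]⟩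
  refine ⟨p.n, f, ⟨fun i hi => ?_, fun i hi => ⟨fun hc => ?_, fun hc hS => ?_⟩⟩,
    fun i hi j hj hij => ?_, ?_, ?_⟩
  · rw [← hf i hi.le, ← hf (i + 1) hi]
    exact p.adj ⟨i, hi⟩
  · by_contra hn
    rw [← hf i (by omega), ← hf (i + 1) (by omega), ← hf (i + 2) hi] at hc
    rw [← hf (i + 1) (by omega)] at hn
    exact hp ⟨i + 1, by omega, by omega,
      Or.inr ⟨⟨by omega, by omega, hc⟩, fun d hd hdS => hn ⟨d, hdS, hd⟩⟩⟩
  · rw [← hf i (by omega), ← hf (i + 1) (by omega), ← hf (i + 2) hi] at hc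
    rw [← hf (i + 1) (by omega)] at hS
    exact hp ⟨i + 1, by omega, by omega, Or.inl ⟨fun ⟨_, _, hcol⟩ => hc hcol, hS.1⟩⟩
  · rw [← hf i hi, ← hf j hj] at hij
    simpa using p.inj hij
  · rw [← hf 0 (by omega), p.first]
  · rw [← hf p.n le_rfl, p.last]

/-- Interior nodes of a path from `x` to `y` differ from `x` and `y`, so it is no loss that
non-colliders are only known to avoid `S \ {x, y}`. -/
theorem HasActivePath.not_dSep (h : D.HasActivePath S (S \ {x, y}) x y) : ¬ D.dSep x y S := by
  obtain ⟨n, f, hf, hinj, hx, hy⟩ := h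
  rw [dSep, not_forall]
  refine ⟨⟨n, fun i => f i, fun i j hij => Fin.ext (hinj i.is_le j.is_le hij), hx, hy,
    fun i => hf.adj i i.2⟩, ?_⟩
  rintro ⟨_ | i, hi0, hin, hi⟩
  · exact absurd hi0 (lt_irrefl _)
  have hopen := hf.openTriple i hin
  rcases hi with ⟨hnc, hS⟩ | ⟨⟨_, _, hc⟩, hnS⟩
  · refine hopen.2 (fun hc => hnc ⟨hi0, hin, hc⟩) ⟨hS, ?_⟩
    rintro (h | h)
    · exact absurd (hinj (Set.mem_Iic.2 hin.le) (Set.mem_Iic.2 (Nat.zero_le n)) (h.trans hx.symm))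
        (by omega)
    · exact hin.ne (hinj (Set.mem_Iic.2 hin.le) (Set.mem_Iic.2 le_rfl) (h.trans hy.symm))
  · obtain ⟨d, hdS, hd⟩ := hopen.1 hc
    exact hnS d hd hdS

end ActiveWalk

section Moral

/-- Adjacency in the moral graph of the subgraph of `D` induced on `U`, after deletion of `T`:
`a` and `b` are adjacent in `D` or have a common child in `U`. -/
def MoralLink (D : Dag V) (U T : Set V) (a b : V) : Prop :=
  a ∈ U \ T ∧ b ∈ U \ T ∧ (D.Adj a b ∨ ∃ c ∈ U, D.edge a c ∧ D.edge b c)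

/-- `x` and `y` are connected outside `S` in the moral graph of the ancestral closure of
`{x, y} ∪ S`, the separation criterion of Lauritzen. -/
def MoralConnected (D : Dag V) (x y : V) (S : Set V) : Prop :=
  ReflTransGen (D.MoralLink (D.ancestors (insert x (insert y S))) (S \ {x, y})) x y

variable {D : Dag V} {S T U : Set V} {a b c x y u v w : V} {n : ℕ} {f : ℕ → V}

theorem MoralLink.symm (h : D.MoralLink U T a b) : D.MoralLink U T b a :=
  ⟨h.2.1, h.1, h.2.2.imp Adj.symm fun ⟨c, hc, hac, hbc⟩ => ⟨c, hc, hbc, hac⟩⟩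

theorem MoralConnected.symm (h : D.MoralConnected x y S) : D.MoralConnected y x S := by
  unfold MoralConnected at h ⊢
  rw [Set.insert_comm, Set.pair_comm]
  exact ReflTransGen.mono (fun _ _ => MoralLink.symm) _ _ h.swap

theorem IsActiveWalk.notMem_of_edge (h : D.IsActiveWalk S T n f) (h0 : f 0 ∉ T) {i : ℕ}
    (hi : i < n) (e : D.edge (f i) (f (i + 1))) : f i ∉ T := by
  rcases i with _ | i
  · exact h0
  · exact (h.openTriple i hi).notMem_of_edge_right e

theorem IsActiveWalk.reflTransGen_moralLink (h : D.IsActiveWalk S T n f) (h0 : f 0 ∉ T) {i : ℕ}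
    (hi : i ≤ n) (hiT : f i ∉ T) :
    ReflTransGen (D.MoralLink (D.ancestors (insert (f 0) (insert (f n) S))) T) (f 0) (f i) := by
  induction i using Nat.strong_induction_on with
  | _ i ih =>
    rcases i with _ | i
    · exact .refl
    have hi1 := h.mem_ancestors hi
    by_cases hT : f i ∈ T
    · obtain ⟨j, rfl⟩ : ∃ j, i = j + 1 :=
        Nat.exists_eq_succ_of_ne_zero fun h00 => h0 (h00 ▸ hT)
      obtain ⟨hl, hr⟩ : D.edge (f j) (f (j + 1)) ∧ D.edge (f (j + 2)) (f (j + 1)) := by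
        by_contra hnc
        exact (h.openTriple j hi).2 hnc hT
      have hjT := h.notMem_of_edge h0 (by omega) hl
      exact (ih j (by omega) (by omega) hjT).tail ⟨⟨h.mem_ancestors (by omega), hjT⟩, ⟨hi1, hiT⟩,
        Or.inr ⟨_, h.mem_ancestors (by omega), hl, hr⟩⟩
    · exact (ih i (by omega) (by omega) hT).tail
        ⟨⟨h.mem_ancestors (by omega), hT⟩, ⟨hi1, hiT⟩, Or.inl (h.adj i hi)⟩

theorem reachesAlong_of_anc (hTS : T ⊆ S) (hwx : D.Anc w x) (hw : w ∉ D.ancestors S)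
    (hadj : D.Adj w v) : D.ReachesAlong S T x w v := by
  induction hwx using ReflTransGen.head_induction_on generalizing v with
  | refl => exact reachesAlong_self hadj
  | head e _ ih =>
    have hw' := fun h => hw (mem_ancestors_of_edge e h)
    exact (ih hw' (Or.inr e)).step hadj
      (openTriple_of_edge_left e fun h => hw (mem_ancestors_of_mem (hTS h)))

theorem ReachesAlong.hasActivePath_of_anc (h : D.ReachesAlong S T x v w) (hTS : T ⊆ S)
    (hwy : D.Anc w y) (hw : w ∉ D.ancestors S) : D.HasActivePath S T x y := by
  induction hwy using ReflTransGen.head_induction_on generalizing v with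
  | refl => exact h.hasActivePath
  | head e _ ih =>
    exact ih (h.step (Or.inl e) (openTriple_of_edge_right e
      fun h' => hw (mem_ancestors_of_mem (hTS h')))) fun hc => hw (mem_ancestors_of_edge e hc)

/-- A collider on the walk need not be open: if it is an ancestor of `x`, approach it from `x`. -/
theorem ReachesAlong.step_collider (h : D.ReachesAlong S T x v c) (hTS : T ⊆ S)
    (hy : ¬ D.HasActivePath S T x y) (hc : c ∈ D.ancestors (insert x (insert y S)))
    (hvc : D.edge v c) (hwc : D.edge w c) : D.ReachesAlong S T x c w := by
  by_cases hcS : c ∈ D.ancestors S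
  · exact h.step (Or.inr hwc) (openTriple_of_collider hvc hwc hcS)
  · obtain ⟨d, rfl | rfl | hd, hcd⟩ := hc
    · exact reachesAlong_of_anc hTS hcd hcS (Or.inr hwc)
    · exact absurd (h.hasActivePath_of_anc hTS hcd hcS) hy
    · exact absurd ⟨d, hd, hcd⟩ hcS

theorem hasActivePath_of_reflTransGen_moralLink (hTS : T ⊆ S)
    (h : ReflTransGen (D.MoralLink (D.ancestors (insert x (insert y S))) T) x y) :
    D.HasActivePath S T x y := by
  by_contra hy
  suffices H : ∀ u, ReflTransGen (D.MoralLink (D.ancestors (insert x (insert y S))) T) x u →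
      D.HasActivePath S T x u ∧ ∀ w, D.Adj u w → D.ReachesAlong S T x u w from hy (H y h).1
  intro u hu
  induction hu with
  | refl =>
    exact ⟨⟨0, fun _ => x, ⟨fun _ hi => absurd hi (by omega), fun _ hi => absurd hi (by omega)⟩,
      fun i hi j hj _ => (Nat.le_zero.1 hi).trans (Nat.le_zero.1 hj).symm, rfl, rfl⟩,
      fun w => reachesAlong_self⟩
  | @tail u v _ huv ih =>
    obtain ⟨-, ⟨hvU, hvT⟩, hadj | ⟨c, hcU, huc, hvc⟩⟩ := huv
    · have hv := ih.2 v hadj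
      refine ⟨hv.hasActivePath, fun w hvw => ?_⟩
      by_cases hcol : D.edge u v ∧ D.edge w v
      · exact hv.step_collider hTS hy hvU hcol.1 hcol.2
      · exact hv.step hvw ⟨fun hc => absurd hc hcol, fun _ => hvT⟩
    · have hv := (ih.2 c (Or.inl huc)).step_collider hTS hy hcU huc hvc
      exact ⟨hv.hasActivePath, fun w hvw => hv.step hvw (openTriple_of_edge_left hvc hvT)⟩

theorem not_dSep_iff_moralConnected : ¬ D.dSep x y S ↔ D.MoralConnected x y S := by
  refine ⟨fun h => ?_, fun h =>
    (hasActivePath_of_reflTransGen_moralLink Set.sdiff_subset h).not_dSep⟩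
  obtain ⟨n, f, hf, -, rfl, rfl⟩ := hasActivePath_of_not_dSep h
  exact hf.reflTransGen_moralLink (by simp) le_rfl (by simp)

theorem MoralConnected.not_dSep (h : D.MoralConnected x y S) : ¬ D.dSep x y S :=
  not_dSep_iff_moralConnected.2 h

theorem dSep.symm (h : D.dSep x y S) : D.dSep y x S := by
  by_contra h'
  exact (not_dSep_iff_moralConnected.1 h').symm.not_dSep h

theorem dSep_pa (hanc : ¬ D.Anc x y) (hadj : ¬ D.Adj x y) : D.dSep x y (D.Pa x) := by
  by_contra h
  have hchild : ∀ c ∈ D.ancestors (insert x (insert y (D.Pa x))), ¬ D.edge x c := by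
    rintro c ⟨d, rfl | rfl | hd, hcd⟩ e
    · exact D.acyclic _ _ e hcd
    · exact hanc ((anc_of_edge e).trans hcd)
    · exact D.acyclic _ _ e (hcd.trans (anc_of_edge hd))
  rcases (not_dSep_iff_moralConnected.1 h).cases_head with rfl | ⟨v, ⟨-, ⟨hvU, hvT⟩, hv⟩, -⟩
  · exact hanc (Anc.refl D _)
  rcases hv with (e | e) | ⟨c, hcU, e, -⟩
  · exact hchild v hvU e
  · refine hvT ⟨e, ?_⟩
    rintro (rfl | rfl)
    · exact ne_of_edge e rfl
    · exact hadj (Or.inr e)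
  · exact hchild c hcU e

theorem not_dSep_of_anc (hS : S ⊆ D.Pa x) (hxy : D.Anc x y) : ¬ D.dSep x y S := by
  refine MoralConnected.not_dSep ?_
  have hmem : ∀ v, D.Anc x v → D.Anc v y →
      v ∈ D.ancestors (insert x (insert y S)) \ (S \ {x, y}) := fun v hxv hvy =>
    ⟨⟨y, Or.inr (Or.inl rfl), hvy⟩, fun hv => D.acyclic _ _ (hS hv.1) hxv⟩
  suffices H : ∀ v, D.Anc v y → D.Anc x v → ReflTransGen (D.MoralLink _ _) v y from
    H x hxy (Anc.refl D x)
  intro v hvy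
  induction hvy using ReflTransGen.head_induction_on with
  | refl => exact fun _ => .refl
  | @head v w e hwy ih =>
    intro hxv
    have hxw := hxv.trans (anc_of_edge e)
    exact .head ⟨hmem v hxv ((anc_of_edge e).trans hwy), hmem w hxw hwy, Or.inl (Or.inl e)⟩ (ih hxw)

theorem left_mem_moral : x ∈ D.ancestors (insert x (insert y S)) \ (S \ {x, y}) :=
  ⟨mem_ancestors_of_mem (by simp), by simp⟩

theorem right_mem_moral : y ∈ D.ancestors (insert x (insert y S)) \ (S \ {x, y}) :=
  ⟨mem_ancestors_of_mem (by simp), by simp⟩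

theorem not_dSep_of_adj (h : D.Adj x y) (S : Set V) : ¬ D.dSep x y S :=
  MoralConnected.not_dSep (.single ⟨left_mem_moral, right_mem_moral, Or.inl h⟩)

theorem exists_dSep (hne : x ≠ y) (hadj : ¬ D.Adj x y) : ∃ S, D.dSep x y S := by
  by_cases hxy : D.Anc x y
  · have hyx : ¬ D.Anc y x := fun hyx => by
      obtain rfl | ⟨c, e, hcy⟩ := hxy.cases_head
      · exact hne rfl
      · exact D.acyclic _ _ e (Anc.trans hcy hyx)
    exact ⟨D.Pa y, (dSep_pa hyx fun h => hadj h.symm).symm⟩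
  · exact ⟨D.Pa x, dSep_pa hxy hadj⟩

theorem not_dSep_of_nonCollider (hab : D.Adj a b) (hbc : D.Adj b c)
    (hcol : ¬ (D.edge a b ∧ D.edge c b)) (hb : b ∉ S) : ¬ D.dSep a c S := by
  have hbU : b ∈ D.ancestors (insert a (insert c S)) \ (S \ {a, c}) := by
    refine ⟨?_, fun h => hb h.1⟩
    rcases hab with e | e
    · exact mem_ancestors_of_edge (hbc.resolve_right fun e' => hcol ⟨e, e'⟩) right_mem_moral.1
    · exact mem_ancestors_of_edge e left_mem_moral.1
  exact MoralConnected.not_dSep (.head ⟨left_mem_moral, hbU, Or.inl hab⟩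
    (.single ⟨hbU, right_mem_moral, Or.inl hbc⟩))

theorem not_dSep_of_collider (hab : D.edge a b) (hcb : D.edge c b) (hb : b ∈ S) :
    ¬ D.dSep a c S :=
  MoralConnected.not_dSep (.single ⟨left_mem_moral, right_mem_moral,
    Or.inr ⟨b, mem_ancestors_of_mem (Or.inr (Or.inr hb)), hab, hcb⟩⟩)

end Moral

section CoveredReversal

/-- `D₁` arises from `D` by reversing the covered edge `a → b`, one for which `a` and `b` have the
same parents apart from `a` itself. -/
structure CoveredReversal (D D₁ : Dag V) (a b : V) : Prop where
  edge : D.edge a b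
  covered : ∀ p, p ≠ a → (D.edge p b ↔ D.edge p a)
  edge_iff : ∀ u v, D₁.edge u v ↔ D.edge u v ∧ ¬ (u = a ∧ v = b) ∨ u = b ∧ v = a

theorem exists_coveredReversal {D : Dag V} {a b : V} (e : D.edge a b)
    (hcov : ∀ p, p ≠ a → (D.edge p b ↔ D.edge p a)) : ∃ D₁, CoveredReversal D D₁ a b := by
  set r : V → V → Prop := fun u v => D.edge u v ∧ ¬ (u = a ∧ v = b)
  have hr : ∀ {u v}, ReflTransGen r u v → D.Anc u v := fun h =>
    ReflTransGen.mono (fun _ _ => And.left) _ _ h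
  have hab : ¬ ReflTransGen r a b := fun h => by
    rcases h.cases_tail with h | ⟨p, hap, hpb, hp⟩
    · exact ne_of_edge e h.symm
    · exact D.acyclic _ _ ((hcov p fun hpa => hp ⟨hpa, rfl⟩).1 hpb) (hr hap)
  refine ⟨⟨fun u v => r u v ∨ u = b ∧ v = a, ?_⟩, e, hcov, fun _ _ => Iff.rfl⟩
  rintro u v (huv | ⟨rfl, rfl⟩) hvu
  · rcases reflTransGen_or_single hvu with h | ⟨hvb, hau⟩
    · exact D.acyclic _ _ huv.1 (hr h)
    · exact hab ((hau.tail huv).trans hvb)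
  · exact hab ((reflTransGen_or_single hvu).elim id And.left)

namespace CoveredReversal

variable {D D₁ : Dag V} {a b u v d x y : V} {S T W : Set V}

theorem symm (h : CoveredReversal D D₁ a b) : CoveredReversal D₁ D b a where
  edge := (h.edge_iff b a).2 (Or.inr ⟨rfl, rfl⟩)
  covered p hp := by
    have hab := ne_of_edge h.edge
    have haa : ¬ D.edge a a := fun e => ne_of_edge e rfl
    have := h.covered p
    have := h.edge_iff
    grind
  edge_iff u v := by
    have := not_edge_symm h.edge
    have := h.edge
    have := h.edge_iff
    grind

theorem adj_iff (h : CoveredReversal D D₁ a b) : D₁.Adj u v ↔ D.Adj u v := by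
  have := h.edge
  have := h.edge_iff
  unfold Adj
  grind

theorem edge_or_eq (h : CoveredReversal D D₁ a b) (e : D.edge u v) :
    D₁.edge u v ∨ u = a ∧ v = b := by
  by_cases hab : u = a ∧ v = b
  · exact Or.inr hab
  · exact Or.inl ((h.edge_iff u v).2 (Or.inl ⟨e, hab⟩))

theorem edge_head (h : CoveredReversal D D₁ a b) (e : D.edge u a) : D₁.edge u b :=
  (h.edge_or_eq ((h.covered u (ne_of_edge e)).2 e)).resolve_right fun h' => ne_of_edge e h'.1

theorem anc (h : CoveredReversal D D₁ a b) (hvd : D.Anc v d) :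
    D₁.Anc v d ∨ v = a ∧ D₁.Anc b d := by
  induction hvd using ReflTransGen.head_induction_on with
  | refl => exact Or.inl (Anc.refl D₁ d)
  | head e _ ih =>
    rcases ih with ih | ⟨rfl, ih⟩
    · rcases h.edge_or_eq e with e | ⟨rfl, rfl⟩
      · exact Or.inl ((anc_of_edge e).trans ih)
      · exact Or.inr ⟨rfl, ih⟩
    · exact Or.inl ((anc_of_edge (h.edge_head e)).trans ih)

theorem mem_ancestors (h : CoveredReversal D D₁ a b) (hv : v ∈ D.ancestors W) :
    v ∈ D₁.ancestors W ∨ v = a ∧ b ∈ D₁.ancestors W :=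
  let ⟨d, hd, hvd⟩ := hv
  (h.anc hvd).imp (fun h => ⟨d, hd, h⟩) (And.imp_right fun h => ⟨d, hd, h⟩)

theorem reflTransGen_moralLink (h : CoveredReversal D D₁ a b)
    (huv : D.MoralLink (D.ancestors W) T u v) (hu : u ∈ D₁.ancestors W) (hv : v ∈ D₁.ancestors W) :
    ReflTransGen (D₁.MoralLink (D₁.ancestors W) T) u v := by
  obtain ⟨⟨-, huT⟩, ⟨-, hvT⟩, hl⟩ := huv
  have hadj (hl : D.Adj u v) : ReflTransGen (D₁.MoralLink (D₁.ancestors W) T) u v :=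
    .single ⟨⟨hu, huT⟩, ⟨hv, hvT⟩, Or.inl (h.adj_iff.2 hl)⟩
  have hchild {c : V} (hc : c ∈ D₁.ancestors W) (huc : D₁.edge u c) (hvc : D₁.edge v c) :
      ReflTransGen (D₁.MoralLink (D₁.ancestors W) T) u v :=
    .single ⟨⟨hu, huT⟩, ⟨hv, hvT⟩, Or.inr ⟨c, hc, huc, hvc⟩⟩
  rcases hl with hl | ⟨c, hc, huc, hvc⟩
  · exact hadj hl
  rcases h.mem_ancestors hc with hc | ⟨rfl, hb⟩
  · by_cases huv : u = v
    · exact huv ▸ .refl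
    rcases h.edge_or_eq huc with huc | ⟨rfl, rfl⟩
    · rcases h.edge_or_eq hvc with hvc | ⟨rfl, rfl⟩
      · exact hchild hc huc hvc
      · exact hadj (Or.inl ((h.covered u huv).1 ‹_›))
    · exact hadj (Or.inr ((h.covered v (Ne.symm huv)).1 hvc))
  · exact hchild hb (h.edge_head huc) (h.edge_head hvc)

theorem eq_or_edge_of_moralLink (h : CoveredReversal D D₁ a b)
    (huv : D.MoralLink (D.ancestors W) T u v) (hu : u ∈ D₁.ancestors W)
    (hv : v ∉ D₁.ancestors W) : (u = b ∨ D₁.edge u b) ∧ b ∈ D₁.ancestors W := by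
  obtain ⟨-, ⟨hvW, -⟩, hl⟩ := huv
  obtain ⟨rfl, hb⟩ := (h.mem_ancestors hvW).resolve_left hv
  refine ⟨?_, hb⟩
  rcases hl with (e | e) | ⟨c, hc, huc, hvc⟩
  · exact Or.inr (h.edge_head e)
  · rcases h.edge_or_eq e with e | ⟨-, rfl⟩
    · exact absurd (mem_ancestors_of_edge e hu) hv
    · exact Or.inl rfl
  · rcases h.edge_or_eq hvc with e | ⟨-, rfl⟩
    · rcases h.mem_ancestors hc with hc | ⟨rfl, -⟩
      · exact absurd (mem_ancestors_of_edge e hc) hv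
      · exact absurd rfl (ne_of_edge e)
    · refine Or.inr ((h.edge_or_eq huc).resolve_right ?_)
      rintro ⟨rfl, -⟩
      exact hv hu

/-- The only node that can leave the ancestral closure is `a`; its neighbours in the moral graph
are then `b` and parents of `b`, so walks through `a` can be short-cut. -/
theorem moralConnected (h : CoveredReversal D D₁ a b) (hxy : D.MoralConnected x y S) :
    D₁.MoralConnected x y S := by
  set W : Set V := insert x (insert y S)
  set T : Set V := S \ {x, y}
  suffices H : ∀ v, ReflTransGen (D.MoralLink (D.ancestors W) T) x v →
      (v ∈ D₁.ancestors W → ReflTransGen (D₁.MoralLink (D₁.ancestors W) T) x v) ∧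
      (v ∉ D₁.ancestors W → ∃ u ∈ D₁.ancestors W \ T, (u = b ∨ D₁.edge u b) ∧
        ReflTransGen (D₁.MoralLink (D₁.ancestors W) T) x u) from
    (H y hxy).1 right_mem_moral.1
  intro v hv
  induction hv with
  | refl => exact ⟨fun _ => .refl, fun hx => absurd left_mem_moral.1 hx⟩
  | @tail v w _ hvw ih =>
    by_cases hv : v ∈ D₁.ancestors W
    · refine ⟨fun hw => (ih.1 hv).trans (h.reflTransGen_moralLink hvw hv hw), fun hw => ?_⟩
      exact ⟨v, ⟨hv, hvw.1.2⟩, (h.eq_or_edge_of_moralLink hvw hv hw).1, ih.1 hv⟩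
    · refine ⟨fun hw => ?_, fun _ => ih.2 hv⟩
      obtain ⟨u, hu, hub, hxu⟩ := ih.2 hv
      obtain ⟨hwb, hb⟩ := h.eq_or_edge_of_moralLink hvw.symm hw hv
      have hw' : w ∈ D₁.ancestors W \ T := ⟨hw, hvw.2.1.2⟩
      rcases hub with rfl | hub
      · rcases hwb with rfl | hwb
        · exact hxu
        · exact hxu.tail ⟨hu, hw', Or.inl (Or.inr hwb)⟩
      · rcases hwb with rfl | hwb
        · exact hxu.tail ⟨hu, hw', Or.inl (Or.inl hub)⟩
        · exact hxu.tail ⟨hu, hw', Or.inr ⟨b, hb, hub, hwb⟩⟩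

theorem mEquiv (h : CoveredReversal D D₁ a b) : D.MEquiv D₁ := fun x y S => by
  rw [← not_iff_not, not_dSep_iff_moralConnected, not_dSep_iff_moralConnected]
  exact ⟨h.moralConnected, h.symm.moralConnected⟩

end CoveredReversal

end CoveredReversal

section SamePattern

/-- `D` and `D'` have the same adjacencies and the same v-structures. -/
structure SamePattern (D D' : Dag V) : Prop where
  adj_iff : ∀ a b, D.Adj a b ↔ D'.Adj a b
  vStructure_iff : ∀ a b c, a ≠ c → ¬ D.Adj a c →
    (D.edge a b ∧ D.edge c b ↔ D'.edge a b ∧ D'.edge c b)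

variable {D D' D'' : Dag V} {a b c : V}

theorem SamePattern.refl (D : Dag V) : SamePattern D D :=
  ⟨fun _ _ => Iff.rfl, fun _ _ _ _ _ => Iff.rfl⟩

theorem SamePattern.symm (h : SamePattern D D') : SamePattern D' D where
  adj_iff a b := (h.adj_iff a b).symm
  vStructure_iff a b c hac hadj :=
    (h.vStructure_iff a b c hac fun h' => hadj ((h.adj_iff a c).1 h')).symm

theorem SamePattern.trans (h : SamePattern D D') (h' : SamePattern D' D'') :
    SamePattern D D'' where
  adj_iff a b := (h.adj_iff a b).trans (h'.adj_iff a b)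
  vStructure_iff a b c hac hadj := (h.vStructure_iff a b c hac hadj).trans
    (h'.vStructure_iff a b c hac fun h'' => hadj ((h.adj_iff a c).2 h''))

theorem MEquiv.symm (h : D.MEquiv D') : D'.MEquiv D := fun x y S => (h x y S).symm

theorem MEquiv.trans (h : D.MEquiv D') (h' : D'.MEquiv D'') : D.MEquiv D'' :=
  fun x y S => (h x y S).trans (h' x y S)

theorem MEquiv.adj (h : D.MEquiv D') (hab : D.Adj a b) : D'.Adj a b := by
  by_contra hn
  obtain ⟨S, hS⟩ := exists_dSep hab.ne hn
  exact not_dSep_of_adj hab S ((h a b S).2 hS)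

theorem MEquiv.edge_and_edge (h : D.MEquiv D') (hac : a ≠ c) (hadj : ¬ D.Adj a c)
    (hab : D.edge a b) (hcb : D.edge c b) : D'.edge a b ∧ D'.edge c b := by
  obtain ⟨S, hS⟩ := exists_dSep hac hadj
  by_contra hn
  refine not_dSep_of_nonCollider (h.adj (Or.inl hab)) (h.adj (Or.inr hcb)) hn ?_ ((h a c S).1 hS)
  exact fun hb => not_dSep_of_collider hab hcb hb hS

theorem MEquiv.samePattern (h : D.MEquiv D') : SamePattern D D' where
  adj_iff _ _ := ⟨h.adj, h.symm.adj⟩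
  vStructure_iff _ _ _ hac hadj :=
    ⟨fun e => h.edge_and_edge hac hadj e.1 e.2,
      fun e => h.symm.edge_and_edge hac (fun h' => hadj (h.symm.adj h')) e.1 e.2⟩

/-- The edges of `D` that are reversed in `D'`. -/
def disagreement (D D' : Dag V) : Set (V × V) := {p | D.edge p.1 p.2 ∧ D'.edge p.2 p.1}

theorem CoveredReversal.disagreement_eq {D₁ : Dag V} (h : CoveredReversal D D₁ a b)
    (hba : D'.edge b a) : disagreement D₁ D' = disagreement D D' \ {(a, b)} := by
  ext ⟨u, v⟩
  have := not_edge_symm hba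
  simp only [disagreement, Set.mem_ofPred_eq, Set.mem_sdiff, Set.mem_singleton_iff, Prod.mk.injEq,
    h.edge_iff]
  grind

variable [Finite V]

/-- Chickering's choice: among the edges on which `D` and `D'` disagree, take a lowest head `b` and
then a highest tail `a`. -/
theorem SamePattern.exists_covered (h : SamePattern D D')
    (hne : ∃ a b, D.edge a b ∧ D'.edge b a) :
    ∃ a b, D.edge a b ∧ D'.edge b a ∧ ∀ p, p ≠ a → (D.edge p b ↔ D.edge p a) := by
  obtain ⟨a₀, b₀, h₀⟩ := hne
  obtain ⟨b, ⟨a₁, h₁⟩, hb⟩ := Set.exists_min_image {b | ∃ a, D.edge a b ∧ D'.edge b a} D.height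
    (Set.toFinite _) ⟨b₀, a₀, h₀⟩
  obtain ⟨a, ⟨hab, hba⟩, ha⟩ := Set.exists_max_image {a | D.edge a b ∧ D'.edge b a} D.height
    (Set.toFinite _) ⟨a₁, h₁⟩
  have agree_head {u v : V} (e : D.edge u v) (hv : D.height v < D.height b) : D'.edge u v :=
    ((h.adj_iff u v).1 (Or.inl e)).resolve_right fun e' => absurd (hb v ⟨u, e, e'⟩) hv.not_ge
  refine ⟨a, b, hab, hba, fun p hpa => ⟨fun e => ?_, fun e => ?_⟩⟩
  · have hadj : D.Adj p a := by
      by_contra hn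
      exact not_edge_symm hba ((h.vStructure_iff p b a hpa hn).1 ⟨e, hab⟩).2
    refine hadj.resolve_right fun e' => ?_
    have hpb : D'.edge p b := ((h.adj_iff p b).1 (Or.inl e)).resolve_right fun e'' =>
      absurd (ha p ⟨e, e''⟩) (height_lt_of_edge e').not_ge
    have hap : D'.edge a p := agree_head e' (height_lt_of_edge e)
    exact D'.acyclic _ _ hpb ((anc_of_edge hba).trans (anc_of_edge hap))
  · have hpa' : D'.edge p a := agree_head e (height_lt_of_edge hab)
    have hpb : p ≠ b := fun hpb => not_edge_symm hab (hpb ▸ e)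
    have hadj : D.Adj p b := by
      by_contra hn
      exact not_edge_symm hab ((h.vStructure_iff p a b hpb hn).2 ⟨hpa', hba⟩).2
    exact hadj.edge_of_anc ((anc_of_edge e).trans (anc_of_edge hab))

theorem SamePattern.mEquiv (h : SamePattern D D') : D.MEquiv D' := by
  induction hn : (disagreement D D').ncard generalizing D with
  | zero =>
    rw [Set.ncard_eq_zero (Set.toFinite _)] at hn
    have hedge : ∀ a b, D.edge a b → D'.edge a b := fun a b e =>
      ((h.adj_iff a b).1 (Or.inl e)).resolve_right fun e' =>
        (hn ▸ ⟨e, e'⟩ : (a, b) ∈ (∅ : Set (V × V)))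
    obtain rfl := ext_of_adj_of_edge_imp h.adj_iff hedge
    exact fun _ _ _ => Iff.rfl
  | succ n ih =>
    obtain ⟨⟨a₀, b₀⟩, h₀⟩ : (disagreement D D').Nonempty := by
      rw [← Set.ncard_pos (Set.toFinite _), hn]
      exact n.succ_pos
    obtain ⟨a, b, hab, hba, hcov⟩ := h.exists_covered ⟨a₀, b₀, h₀⟩
    obtain ⟨D₁, hD₁⟩ := exists_coveredReversal hab hcov
    refine hD₁.mEquiv.trans (ih (hD₁.mEquiv.samePattern.symm.trans h) ?_)
    have hmem : (a, b) ∈ disagreement D D' := ⟨hab, hba⟩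
    rw [hD₁.disagreement_eq hba, Set.ncard_sdiff_singleton_of_mem hmem, hn, Nat.add_sub_cancel]

end SamePattern

section Meek

/-- The edges of `D` obtained from its v-structures by closing under Meek's orientation rules.
Where the rules ask that an edge be still undirected, it is asked here that `D` orient it as the
rule prescribes, and in `rule3` only that `c → a ← d` be no v-structure. Meek's fourth rule is
needed only in the presence of background knowledge. -/
inductive Meek (D : Dag V) : V → V → Prop
  | vStructure {a b c : V} : D.edge a b → D.edge c b → a ≠ c → ¬ D.Adj a c → Meek D a b
  | rule1 {a b c : V} : Meek D c a → D.edge a b → c ≠ b → ¬ D.Adj c b → Meek D a b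
  | rule2 {a b c : V} : Meek D a c → Meek D c b → D.Adj a b → Meek D a b
  | rule3 {a b c d : V} : D.edge a b → D.Adj a c → D.Adj a d → Meek D c b → Meek D d b → c ≠ d →
      ¬ D.Adj c d → ¬ (D.edge c a ∧ D.edge d a) → Meek D a b

/-- `a` and `b` are adjacent and Meek's rules leave the edge between them undirected. -/
structure MeekUndirected (D : Dag V) (a b : V) : Prop where
  adj : D.Adj a b
  not_meek : ¬ D.Meek a b
  not_meek_symm : ¬ D.Meek b a

variable {D D' : Dag V} {a b c d : V}

theorem Meek.edge_of_samePattern (h : SamePattern D D') (hab : D.Meek a b) : D'.edge a b := by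
  induction hab with
  | vStructure e e' hne hadj => exact ((h.vStructure_iff _ _ _ hne hadj).1 ⟨e, e'⟩).1
  | rule1 _ e hne hadj ih =>
    exact ((h.adj_iff _ _).1 (Or.inl e)).resolve_right fun e' =>
      not_edge_symm e ((h.vStructure_iff _ _ _ hne hadj).2 ⟨ih, e'⟩).2
  | rule2 _ _ hadj ih ih' => exact edge_of_edge_of_edge ih ih' ((h.adj_iff _ _).1 hadj)
  | rule3 e hac had _ _ hne hadj hncol ihc ihd =>
    refine ((h.adj_iff _ _).1 (Or.inl e)).resolve_right fun e' => ?_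
    exact hncol ((h.vStructure_iff _ _ _ hne hadj).2
      ⟨edge_of_edge_of_edge ihc e' ((h.adj_iff _ _).1 hac.symm),
        edge_of_edge_of_edge ihd e' ((h.adj_iff _ _).1 had.symm)⟩)

theorem Meek.edge (h : D.Meek a b) : D.edge a b := h.edge_of_samePattern (SamePattern.refl D)

theorem MeekUndirected.symm (h : D.MeekUndirected a b) : D.MeekUndirected b a :=
  ⟨h.adj.symm, h.not_meek_symm, h.not_meek⟩

theorem Meek.adj_of_undirected (hab : D.Meek a b) (hbc : D.MeekUndirected b c) : D.Adj a c := by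
  have hac : a ≠ c := fun hac => hbc.not_meek_symm (hac ▸ hab)
  by_contra hn
  rcases hbc.adj with e | e
  · exact hbc.not_meek (.rule1 hab e hac hn)
  · exact hbc.not_meek_symm (.vStructure e hab.edge hac.symm fun h => hn h.symm)

theorem Meek.absorb_of_vStructure (hab : D.edge a b) (hdb : D.edge d b) (hne : a ≠ d)
    (hadj : ¬ D.Adj a d) (hbc : D.MeekUndirected b c) : D.Meek a c := by
  have mab : D.Meek a b := .vStructure hab hdb hne hadj
  have mdb : D.Meek d b := .vStructure hdb hab hne.symm fun h => hadj h.symm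
  have hac := mab.adj_of_undirected hbc
  have hdc := mdb.adj_of_undirected hbc
  rcases hbc.adj with e | e
  · exact .vStructure (edge_of_edge_of_edge hab e hac) (edge_of_edge_of_edge hdb e hdc) hne hadj
  · by_contra hn
    exact hbc.not_meek_symm (.rule3 e hac.symm hdc.symm mab mdb hne hadj
      fun h => hn (.vStructure h.1 h.2 hne hadj))

theorem Meek.absorb (hab : D.Meek a b) (hbc : D.MeekUndirected b c) : D.Meek a c := by
  have hac := hab.adj_of_undirected hbc
  induction hab generalizing c with
  | vStructure e e' hne hadj => exact .absorb_of_vStructure e e' hne hadj hbc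
  | rule1 mda e hne hadj ih =>
    have mab := Meek.rule1 mda e hne hadj
    by_contra hn
    have uac : D.MeekUndirected _ c := ⟨hac, hn, fun mca =>
      hbc.not_meek_symm (.rule2 mca mab hbc.adj.symm)⟩
    exact hadj ((ih uac (mda.adj_of_undirected uac)).adj_of_undirected hbc.symm)
  | rule2 mad mdb _ _ ih => exact .rule2 mad (ih hbc (mdb.adj_of_undirected hbc)) hac
  | rule3 _ hap haq mpb mqb hne hadj hncol ihp ihq =>
    have mpc := ihp hbc (mpb.adj_of_undirected hbc)
    have mqc := ihq hbc (mqb.adj_of_undirected hbc)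
    rcases hac with e' | e'
    · exact .rule3 e' hap haq mpc mqc hne hadj hncol
    · exact absurd ⟨edge_of_edge_of_edge mpc.edge e' hap.symm,
        edge_of_edge_of_edge mqc.edge e' haq.symm⟩ hncol

end Meek

section Perfect

/-- A DAG without v-structures: any two distinct parents of a node are adjacent. -/
def IsPerfect (E : Dag V) : Prop := ∀ a b c, E.edge a b → E.edge c b → a = c ∨ E.Adj a c

/-- `q` is the last ancestor of `x` in the topological order among `a` and the children of `a`. -/
structure IsLast (E : Dag V) (x a q : V) : Prop where
  anc : E.Anc q x
  eq_or_edge : q = a ∨ E.edge a q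
  anc_of_edge : ∀ p, E.Anc p x → p = a ∨ E.edge a p → E.Anc p q

/-- The DAG whose edges are those of `E`, reoriented towards larger `rank`. Neighbours of equal
rank lose their edge. -/
def reorient {α : Type*} [PartialOrder α] (E : Dag V) (rank : V → α) : Dag V where
  edge a b := E.Adj a b ∧ rank a < rank b
  acyclic a b hab hba := by
    suffices h : ∀ c, ReflTransGen (fun p q => E.Adj p q ∧ rank p < rank q) b c →
        rank b ≤ rank c from hab.2.not_ge (h a hba)
    intro c hbc
    induction hbc with
    | refl => exact le_rfl
    | tail _ e ih => exact ih.trans e.2.le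

variable {E : Dag V} {a b c p q r x u v w : V}

theorem adj_reorient_iff {α : Type*} [LinearOrder α] {rank : V → α}
    (hrank : ∀ a b, E.edge a b → rank a ≠ rank b) : (E.reorient rank).Adj a b ↔ E.Adj a b := by
  refine ⟨fun h => h.elim And.left fun h => h.1.symm, fun h => ?_⟩
  have hne : rank a ≠ rank b := h.elim (hrank a b) fun e => (hrank b a e).symm
  exact hne.lt_or_gt.imp (fun hlt => ⟨h, hlt⟩) fun hlt => ⟨h.symm, hlt⟩

theorem IsLast.anc_right (h : E.IsLast x a q) : E.Anc a q :=
  h.eq_or_edge.elim (fun h => h ▸ Anc.refl E q) Dag.anc_of_edge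

theorem IsLast.anc_left (h : E.IsLast x a q) : E.Anc a x := h.anc_right.trans h.anc

namespace IsPerfect

theorem eq_or_edge_of_anc (hE : E.IsPerfect) (hqr : E.Anc q r) (haq : E.Anc a q)
    (e : E.edge a r) : a = q ∨ E.edge a q := by
  induction hqr with
  | refl => exact Or.inr e
  | @tail p r hqp epr ih =>
    rcases hE a r p e epr with rfl | eap | epa
    · exact Or.inl (haq.antisymm hqp)
    · exact ih eap
    · exact absurd (haq.trans hqp) (E.acyclic _ _ epa)

/-- The ancestors `a` of `x`, each spread over the interval from `a` to its last child above `x`,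
are adjacent exactly when their intervals meet. -/
theorem eq_or_edge_of_isLast (hE : E.IsPerfect) (hb : E.IsLast x b q) (ha : E.IsLast x a r)
    (hqr : E.Anc q r) (hab : E.Adj a b) : a = q ∨ E.edge a q := by
  have haq : E.Anc a q := hab.elim (fun e => (anc_of_edge e).trans hb.anc_right)
    fun e => hb.anc_of_edge a ha.anc_left (Or.inr e)
  rcases ha.eq_or_edge with rfl | e
  · exact Or.inl (haq.antisymm hqr)
  · exact hE.eq_or_edge_of_anc hqr haq e

theorem anc_of_adj_source (hE : E.IsPerfect) (hx : ∀ a, ¬ E.edge a x) (hxv : E.Anc x v)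
    (e : E.edge w v) : E.Anc x w := by
  induction hxv generalizing w with
  | refl => exact absurd e (hx w)
  | @tail u v hxu euv ih =>
    rcases hE u v w euv e with rfl | h | h
    · exact hxu
    · exact hxu.tail h
    · exact ih h

theorem anc_of_reflTransGen_adj (hE : E.IsPerfect) (hx : ∀ a, ¬ E.edge a x)
    (h : ReflTransGen E.Adj x v) : E.Anc x v := by
  induction h with
  | refl => exact Anc.refl E x
  | tail _ hadj ih => exact hadj.elim ih.tail (hE.anc_of_adj_source hx ih)

variable [Finite V]

theorem anc_total (hE : E.IsPerfect) (hu : E.Anc u x) (hw : E.Anc w x) :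
    E.Anc u w ∨ E.Anc w u := by
  induction hn : E.height x using Nat.strong_induction_on generalizing x with
  | _ n ih =>
    subst hn
    rcases hu.cases_tail with rfl | ⟨p, hup, ep⟩
    · exact Or.inr hw
    rcases hw.cases_tail with rfl | ⟨q, hwq, eq⟩
    · exact Or.inl hu
    rcases hE p x q ep eq with rfl | e | e
    · exact ih _ (height_lt_of_edge ep) hup hwq rfl
    · exact ih _ (height_lt_of_edge eq) (hup.tail e) hwq rfl
    · exact ih _ (height_lt_of_edge ep) hup (hwq.tail e) rfl

theorem anc_of_height_le (hE : E.IsPerfect) (hu : E.Anc u x) (hw : E.Anc w x)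
    (h : E.height u ≤ E.height w) : E.Anc u w := by
  refine (hE.anc_total hu hw).elim id fun hwu => ?_
  rcases hwu.cases_head with rfl | ⟨c, e, hcu⟩
  · exact Anc.refl E w
  · exact absurd h ((height_lt_of_edge e).trans_le (height_le_of_anc hcu)).not_ge

theorem exists_isLast (hE : E.IsPerfect) (ha : E.Anc a x) : ∃ q, E.IsLast x a q := by
  obtain ⟨q, ⟨hqx, hq⟩, hmax⟩ := Set.exists_max_image {q | E.Anc q x ∧ (q = a ∨ E.edge a q)}
    E.height (Set.toFinite _) ⟨a, ha, Or.inl rfl⟩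
  exact ⟨q, hqx, hq, fun p hpx hp => hE.anc_of_height_le hpx hqx (hmax p ⟨hpx, hp⟩)⟩

end IsPerfect

/-- The rank of `a` in the re-rooting at `x`: ancestors of `x` come first, by decreasing right end
`last a` of their interval and then by decreasing height, followed by the other nodes by increasing
height. -/
noncomputable def rootRank (E : Dag V) (x : V) (last : V → V) (a : V) : ℤ ×ₗ ℤ :=
  open Classical in
  if E.Anc a x then toLex (-E.height (last a), -E.height a) else toLex (0, E.height a)

variable {last : V → V} [Finite V]

theorem rootRank_ne_of_edge (e : E.edge a b) : E.rootRank x last a ≠ E.rootRank x last b := by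
  have hlt := height_lt_of_edge e
  have := E.height_pos (last a)
  have := E.height_pos (last b)
  unfold rootRank
  split_ifs <;> simp only [ne_eq, toLex_inj, Prod.mk.injEq] <;> omega

theorem rootRank_lt_iff_of_anc (hb : E.Anc b x) :
    E.rootRank x last a < E.rootRank x last b ↔
      E.Anc a x ∧ (E.height (last b) < E.height (last a) ∨
        E.height (last b) = E.height (last a) ∧ E.height b < E.height a) := by
  have := E.height_pos (last b)
  unfold rootRank
  by_cases ha : E.Anc a x
  · rw [if_pos ha, if_pos hb, Prod.Lex.toLex_lt_toLex]
    simp only [ha, true_and]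
    omega
  · rw [if_neg ha, if_pos hb, Prod.Lex.toLex_lt_toLex]
    simp only [ha, false_and, iff_false]
    omega

theorem edge_of_rootRank_lt (hb : ¬ E.Anc b x) (hab : E.Adj a b)
    (h : E.rootRank x last a < E.rootRank x last b) : E.edge a b := by
  refine hab.resolve_right fun e => ?_
  have ha : ¬ E.Anc a x := fun ha => hb ((anc_of_edge e).trans ha)
  rw [rootRank, rootRank, if_neg ha, if_neg hb, Prod.Lex.toLex_lt_toLex] at h
  have := height_lt_of_edge e
  omega

/-- The parents of `b` in the re-rooting lie in the clique formed by `last b` and its parents. -/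
theorem IsPerfect.reorient_rootRank (hE : E.IsPerfect)
    (hlast : ∀ a, E.Anc a x → E.IsLast x a (last a)) :
    (E.reorient (E.rootRank x last)).IsPerfect := by
  rintro a b c ⟨hab, hra⟩ ⟨hcb, hrc⟩
  rw [adj_reorient_iff fun _ _ => rootRank_ne_of_edge]
  by_cases hb : E.Anc b x
  · have hpar (d : V) (hdb : E.Adj d b) (hrd : E.rootRank x last d < E.rootRank x last b) :
        d = last b ∨ E.edge d (last b) := by
      obtain ⟨hdx, hd⟩ := (rootRank_lt_iff_of_anc hb).1 hrd
      refine hE.eq_or_edge_of_isLast (hlast b hb) (hlast d hdx) ?_ hdb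
      exact hE.anc_of_height_le (hlast b hb).anc (hlast d hdx).anc (by omega)
    rcases hpar a hab hra with rfl | ea
    · exact (hpar c hcb hrc).imp Eq.symm Or.inr
    · rcases hpar c hcb hrc with rfl | ec
      · exact Or.inr (Or.inl ea)
      · exact hE a (last b) c ea ec
  · exact hE a b c (edge_of_rootRank_lt hb hab hra) (edge_of_rootRank_lt hb hcb hrc)

theorem not_edge_reorient_rootRank (hlast : ∀ a, E.Anc a x → E.IsLast x a (last a)) :
    ¬ (E.reorient (E.rootRank x last)).edge a x := by
  rintro ⟨-, h⟩
  obtain ⟨hax, h⟩ := (rootRank_lt_iff_of_anc (Anc.refl E x)).1 h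
  have hx : last x = x :=
    (hlast x (Anc.refl E x)).anc.antisymm (hlast x (Anc.refl E x)).anc_right
  rw [hx] at h
  have := height_le_of_anc hax
  have := height_le_of_anc (hlast a hax).anc
  omega

theorem IsPerfect.exists_reroot (hE : E.IsPerfect) (x : V) :
    ∃ O : Dag V, (∀ a b, O.Adj a b ↔ E.Adj a b) ∧ O.IsPerfect ∧ ∀ a, ¬ O.edge a x := by
  choose! last hlast using fun a (ha : E.Anc a x) => hE.exists_isLast ha
  exact ⟨E.reorient (E.rootRank x last), fun _ _ => adj_reorient_iff fun _ _ => rootRank_ne_of_edge,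
    hE.reorient_rootRank hlast, fun _ => not_edge_reorient_rootRank hlast⟩

end Perfect

section Rooted

variable {D D' O : Dag V} {a b c v x y : V}

/-- The edges of `D` that Meek's rules leave undirected, with their orientation in `D`. -/
def residual (D : Dag V) : Dag V where
  edge a b := D.edge a b ∧ ¬ D.Meek a b
  acyclic a b hab hba := D.acyclic a b hab.1 (ReflTransGen.mono (fun _ _ => And.left) _ _ hba)

theorem residual_adj_iff : D.residual.Adj a b ↔ D.MeekUndirected a b := by
  constructor
  · rintro (⟨e, hm⟩ | ⟨e, hm⟩)
    · exact ⟨Or.inl e, hm, fun h => not_edge_symm e h.edge⟩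
    · exact ⟨Or.inr e, fun h => not_edge_symm e h.edge, hm⟩
  · rintro ⟨e | e, hab, hba⟩
    · exact Or.inl ⟨e, hab⟩
    · exact Or.inr ⟨e, hba⟩

theorem residual_isPerfect (D : Dag V) : D.residual.IsPerfect := by
  intro a b c hab hcb
  rw [residual_adj_iff, or_iff_not_imp_left]
  have uab : D.MeekUndirected a b := residual_adj_iff.1 (Or.inl hab)
  have ucb : D.MeekUndirected c b := residual_adj_iff.1 (Or.inl hcb)
  refine fun hac => ⟨?_, fun h => uab.not_meek (h.absorb ucb), fun h => ucb.not_meek (h.absorb uab)⟩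
  by_contra hadj
  exact hab.2 (.vStructure hab.1 hcb.1 hac hadj)

/-- The DAG obtained from `D` by keeping the edges oriented by Meek's rules and orienting the
undirected ones as in `O`. -/
def orientUndirected (D O : Dag V) (hO : ∀ a b, O.edge a b → D.MeekUndirected a b) : Dag V where
  edge a b := D.Meek a b ∨ O.edge a b
  acyclic a b hab hba := by
    have habs (a b c : V) (m : D.Meek a b) (e : O.edge b c) : D.Meek a c := m.absorb (hO b c e)
    obtain ⟨w, hbw, hwa⟩ := reflTransGen_or_of_absorb habs hba
    have hDwa : D.Anc w a := ReflTransGen.mono (fun _ _ => Meek.edge) _ _ hwa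
    rcases hab with m | e
    · exact D.acyclic a w (reflTransGen_absorb habs m hbw).edge hDwa
    · rcases hwa.cases_tail with rfl | ⟨p, hwp, m⟩
      · exact O.acyclic _ _ e hbw
      · exact D.acyclic p w (reflTransGen_absorb habs m (.head e hbw)).edge
          (ReflTransGen.mono (fun _ _ => Meek.edge) _ _ hwp)

theorem SamePattern.orientUndirected (hadj : ∀ a b, O.Adj a b ↔ D.MeekUndirected a b)
    (hO : O.IsPerfect) :
    SamePattern D (D.orientUndirected O fun a b e => (hadj a b).1 (Or.inl e)) where
  adj_iff a b := by
    constructor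
    · intro h
      by_cases hab : D.Meek a b
      · exact Or.inl (Or.inl hab)
      by_cases hba : D.Meek b a
      · exact Or.inr (Or.inl hba)
      exact ((hadj a b).2 ⟨h, hab, hba⟩).imp Or.inr Or.inr
    · rintro ((m | e) | (m | e))
      · exact Or.inl m.edge
      · exact ((hadj a b).1 (Or.inl e)).adj
      · exact Or.inr m.edge
      · exact ((hadj a b).1 (Or.inr e)).adj
  vStructure_iff a b c hac hn := by
    constructor
    · rintro ⟨e, e'⟩
      exact ⟨Or.inl (.vStructure e e' hac hn), Or.inl (.vStructure e' e hac.symm (hn ·.symm))⟩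
    · rintro ⟨m | e, m' | e'⟩
      · exact ⟨m.edge, m'.edge⟩
      · exact absurd (m.adj_of_undirected ((hadj b c).1 (Or.inr e'))) hn
      · exact absurd (m'.adj_of_undirected ((hadj b a).1 (Or.inr e))).symm hn
      · exact absurd ((hadj a c).1 ((hO a b c e e').resolve_left hac)).adj hn

theorem exists_samePattern_rooted [Finite V] (D : Dag V) (x : V) :
    ∃ D', SamePattern D D' ∧ (∀ a, D'.edge a x → D.Meek a x) ∧
      ∀ v, ReflTransGen D.MeekUndirected x v → D'.Anc x v := by
  obtain ⟨O, hOadj, hO, hx⟩ := D.residual_isPerfect.exists_reroot x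
  have hadj (a b : V) : O.Adj a b ↔ D.MeekUndirected a b := (hOadj a b).trans residual_adj_iff
  refine ⟨_, .orientUndirected hadj hO, fun a e => e.resolve_right (hx a), fun v hv => ?_⟩
  have hOv : O.Anc x v :=
    hO.anc_of_reflTransGen_adj hx (ReflTransGen.mono (fun a b => (hadj a b).2) _ _ hv)
  exact ReflTransGen.mono (fun _ _ => Or.inr) _ _ hOv

theorem SamePattern.pa_eq_cpPa [Finite V] (h : SamePattern D D')
    (hpa : ∀ a, D'.edge a x → D.Meek a x) : D'.Pa x = D.CpPa x :=
  Set.ext fun a => ⟨fun e _ h' => (hpa a e).edge_of_samePattern h'.samePattern,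
    fun e => e D' h.mEquiv⟩

theorem anc_of_directedIn {p : GPath D.Adj x y} (hp : p.DirectedIn) (i : Fin (p.n + 1)) :
    D.Anc x (p.f i) := by
  induction i using Fin.induction with
  | zero =>
    rw [show p.f 0 = x from p.first]
    exact Anc.refl D x
  | succ i ih => exact ih.tail (hp i)

theorem exists_directedIn (h : D.Anc x y) : ∃ p : GPath D.Adj x y, p.DirectedIn := by
  induction h using ReflTransGen.head_induction_on with
  | refl =>
    exact ⟨⟨0, fun _ => y, fun i j _ => Subsingleton.elim (α := Fin 1) i j, rfl, rfl,
      fun i => i.elim0⟩, fun i => i.elim0⟩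
  | @head a b e _ ih =>
    obtain ⟨p, hp⟩ := ih
    have hedge (i : Fin (p.n + 1)) : D.edge ((Fin.cons a p.f : Fin (p.n + 2) → V) i.castSucc)
        ((Fin.cons a p.f : Fin (p.n + 2) → V) i.succ) := by
      cases i using Fin.cases with
      | zero =>
        change D.edge a (p.f 0)
        rwa [show p.f 0 = _ from p.first]
      | succ i => exact hp i
    refine ⟨⟨p.n + 1, Fin.cons a p.f, Fin.cons_injective_iff.2 ⟨?_, p.inj⟩, rfl, p.last,
      fun i => Or.inl (hedge i)⟩, hedge⟩
    rintro ⟨i, hi⟩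
    exact D.acyclic a b e (hi ▸ anc_of_directedIn hp i)

theorem PossAn.of_anc (h : D.MEquiv D') (hxy : D'.Anc x y) : D.PossAn x y := by
  obtain ⟨p, hp⟩ := exists_directedIn hxy
  exact ⟨⟨p.n, p.f, p.inj, p.first, p.last, fun i => h.symm.adj (p.adj i)⟩,
    fun i hi => not_edge_symm (hp i) (hi _ h)⟩

/-- Along a possibly directed path from `x` the undirected edges are absorbed by the last edge
oriented by Meek's rules, if there is one. -/
theorem SamePattern.anc_of_possAn (h : SamePattern D D')
    (hroot : ∀ v, ReflTransGen D.MeekUndirected x v → D'.Anc x v) (hxy : D.PossAn x y) :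
    D'.Anc x y := by
  obtain ⟨p, hp⟩ := hxy
  have hanc (v : V) (hv : ReflTransGen D.MeekUndirected x v ∨ ∃ w, D'.Anc x w ∧ D.Meek w v) :
      D'.Anc x v :=
    hv.elim (hroot v) fun ⟨_, hxw, m⟩ => hxw.tail (m.edge_of_samePattern h)
  suffices H : ∀ i, ReflTransGen D.MeekUndirected x (p.f i) ∨
      ∃ w, D'.Anc x w ∧ D.Meek w (p.f i) from p.last ▸ hanc _ (H _)
  intro i
  induction i using Fin.induction with
  | zero =>
    rw [show p.f 0 = x from p.first]
    exact Or.inl .refl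
  | succ i ih =>
    by_cases m : D.Meek (p.f i.castSucc) (p.f i.succ)
    · exact Or.inr ⟨_, hanc _ ih, m⟩
    · have hu : D.MeekUndirected (p.f i.castSucc) (p.f i.succ) :=
        ⟨p.adj i, m, fun m' => hp i fun _ h' => m'.edge_of_samePattern h'.samePattern⟩
      exact ih.imp (·.tail hu) fun ⟨w, hxw, m⟩ => ⟨w, hxw, m.absorb hu⟩

end Rooted

end Dag

/-- For distinct non-adjacent `X`, `Y`, `X` is a definite non-ancestor of
`Y` in the CPDAG `G` of the MEC of a DAG iff `X` and `Y` are d-separated by `Pa_G(X)` in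
every DAG of the MEC represented by `G`. -/
theorem defNonAn_iff_dSep_pa
    {V : Type*} [Fintype V] (D : Dag V) (X Y : V) (hXY : X ≠ Y)
    (hnadj : ¬ D.Adj X Y) :
    ¬ D.PossAn X Y ↔
      ∀ D' : Dag V, D.MEquiv D' → D'.dSep X Y (D.CpPa X) := by
  obtain ⟨D', hD', hpa, hroot⟩ := D.exists_samePattern_rooted X
  have hmeq : D.MEquiv D' := hD'.mEquiv
  have hPa : D'.Pa X = D.CpPa X := hD'.pa_eq_cpPa hpa
  constructor
  · intro hpos D'' h
    have hsep : D'.dSep X Y (D'.Pa X) :=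
      Dag.dSep_pa (fun hanc => hpos (.of_anc hmeq hanc)) fun hadj => hnadj (hmeq.symm.adj hadj)
    rw [hPa, ← hmeq] at hsep
    exact (h X Y _).1 hsep
  · intro hsep hpos
    exact Dag.not_dSep_of_anc hPa.ge (hD'.anc_of_possAn hroot hpos) (hsep D' hmeq)
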